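/- Correctness of the reduction on hard instances: For all positive integers m and n ≥ 2, all x ∈ ({0,1}^n)^m, k ∈ {2,…,n}^m, and d ∈ {0,1}^m, the word w(x,k,d) ∈ RD(m,n) belongs to PQ(3mn) if and only if f_m(x,k,d) = 0, where f_m(x,k,d) = ⋁_{i=1}^m f(x_i, k_i, d_i) and f(x,k,d) = [(d = 0) ∧ (x[k] = 1)]. Equivalently, w(x,k,d) ∈ PQ(3mn) iff for every i ∈ {1,…,m}, it is not the case that d_i = 0 and x_i[k_i] = 1. -/

import Mathlib

/-!
All extractions of the word come in blocks: a list `l` of present values is removed in decreasing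
order while a multiset `R` stays behind. Such a block is a legal priority-queue run exactly when
every element of `R` is at most every element of `l` (`PQOK_sortDesc`). In motif `i` the values
removed are `E = {v_{i,1}, …, v_{i,k_i-1}, a_i}`, and `R` consists of the leftovers of the previous
motifs together with `v_{i,k_i}, …, v_{i,n}`.

The values of motif `i` lie in the window from `3n(i-1)` to `3ni`, so earlier leftovers never
obstruct, and `v_{i,j}` decreases strictly in `j`, so no `v_{i,j}` in `E` is smaller than a
remaining one. Also `a_i` exceeds `v_{i,j}` for `j > k_i`. The only comparison that depends on the
data is `v_{i,k_i} ≤ a_i`, i.e. `2 x_i[k_i] ≤ 1 + 3 d_i`, which fails exactly when `d_i = 0` and `x_i[k_i] = 1`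
(`motif_condition`). Induction on the number of motifs (`PQOK_motifs`) gives the equivalence, the
final extraction block being legal because it leaves nothing behind.
-/

/-- A letter of the alphabet `Σ = {ins(a), ext(a)}`. -/
inductive Letter where
  | ins : ℕ → Letter
  | ext : ℕ → Letter
deriving DecidableEq

/-- The value carried by a letter. -/
def Letter.value : Letter → ℕ
  | .ins a => a
  | .ext a => a

/-- `CollectionOK M w`: starting from multiset `M`, every extraction in `w` extracts a
currently present value and the final multiset is empty (so every inserted value is
extracted exactly once). `CollectionOK 0 w` means `w ∈ Collection`. -/
def CollectionOK : Multiset ℕ → List Letter → Prop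
  | M, [] => M = 0
  | M, .ins a :: w => CollectionOK (a ::ₘ M) w
  | M, .ext a :: w => a ∈ M ∧ CollectionOK (M.erase a) w

/-- `PQOK M w`: starting from multiset `M`, the word `w` is a valid priority-queue
transcript: every extraction extracts the maximum of the current multiset, and the final
multiset is empty. `PQOK 0 w` means `w ∈ PQ` (up to the alphabet constraint). -/
def PQOK : Multiset ℕ → List Letter → Prop
  | M, [] => M = 0
  | M, .ins a :: w => PQOK (a ::ₘ M) w
  | M, .ext a :: w => a ∈ M ∧ (∀ b ∈ M, b ≤ a) ∧ PQOK (M.erase a) w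

/-- `0/1`-value of a Boolean. -/
def bval (b : Bool) : ℕ := if b then 1 else 0

/-- The value `v_{i,j} = 3(ni − j) + 2·x_i[j]` (indices `1 ≤ i ≤ m`, `1 ≤ j ≤ n`). -/
def vVal (n : ℕ) (x : ℕ → ℕ → Bool) (i j : ℕ) : ℕ := 3 * (n * i - j) + 2 * bval (x i j)

/-- The value `a_i = 3(ni − k_i) + 1 + 3·d_i`. -/
def aVal (n : ℕ) (k : ℕ → ℕ) (d : ℕ → Bool) (i : ℕ) : ℕ :=
  3 * (n * i - k i) + 1 + 3 * bval (d i)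

/-- Sort a list of naturals in decreasing order. -/
def sortDesc (l : List ℕ) : List ℕ := l.mergeSort fun a b => decide (b ≤ a)

/-- The `i`-th motif: insert `v_{i,1},…,v_{i,n}`, insert `a_i`, then extract the `k_i`
values `{v_{i,1},…,v_{i,k_i−1}, a_i}` in decreasing order. -/
def motif (n : ℕ) (x : ℕ → ℕ → Bool) (k : ℕ → ℕ) (d : ℕ → Bool) (i : ℕ) : List Letter :=
  ((List.range n).map fun j => Letter.ins (vVal n x i (j + 1))) ++
    [Letter.ins (aVal n k d i)] ++
    (sortDesc (((List.range (k i - 1)).map fun j => vVal n x i (j + 1)) ++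
      [aVal n k d i])).map Letter.ext

/-- The values left after all motifs: `v_{i,j}` for `1 ≤ i ≤ m` and `k_i ≤ j ≤ n`. -/
def leftovers (m n : ℕ) (x : ℕ → ℕ → Bool) (k : ℕ → ℕ) : List ℕ :=
  (List.range m).flatMap fun i' =>
    (List.range (n + 1 - k (i' + 1))).map fun t => vVal n x (i' + 1) (k (i' + 1) + t)

/-- The hard instance `w(x,k,d) ∈ RD(m,n)`: the `m` motifs followed by the extraction of
everything left, in decreasing order. -/
def hardWord (m n : ℕ) (x : ℕ → ℕ → Bool) (k : ℕ → ℕ) (d : ℕ → Bool) : List Letter :=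
  ((List.range m).flatMap fun i' => motif n x k d (i' + 1)) ++
    (sortDesc (leftovers m n x k)).map Letter.ext

theorem PQOK_ins (l : List ℕ) (M : Multiset ℕ) (w : List Letter) :
    PQOK M (l.map Letter.ins ++ w) ↔ PQOK ((l : Multiset ℕ) + M) w := by
  induction l generalizing M with
  | nil => simp
  | cons a t ih =>
    simp only [List.map_cons, List.cons_append, PQOK]
    rw [ih, ← Multiset.cons_coe, Multiset.add_cons, Multiset.cons_add]

theorem PQOK_ext_sorted (l : List ℕ) (hl : l.Pairwise fun a b => b ≤ a) (R : Multiset ℕ)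
    (w : List Letter) :
    PQOK ((l : Multiset ℕ) + R) (l.map Letter.ext ++ w) ↔
      (∀ a ∈ l, ∀ b ∈ R, b ≤ a) ∧ PQOK R w := by
  induction l with
  | nil => simp
  | cons a t ih =>
    rw [List.pairwise_cons] at hl
    simp only [List.map_cons, List.cons_append, PQOK]
    rw [← Multiset.cons_coe, Multiset.cons_add, Multiset.erase_cons_head, ih hl.2]
    simp only [Multiset.mem_cons, Multiset.mem_add, Multiset.mem_coe, List.mem_cons]
    constructor
    · rintro ⟨-, h1, h2, h3⟩
      refine ⟨?_, h3⟩
      rintro c (rfl | hc) b hb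
      · exact h1 b (Or.inr (Or.inr hb))
      · exact h2 c hc b hb
    · rintro ⟨h1, h2⟩
      refine ⟨Or.inl trivial, ?_, fun c hc => h1 c (Or.inr hc), h2⟩
      rintro b (rfl | hb | hb)
      · exact le_rfl
      · exact hl.1 b hb
      · exact h1 a (Or.inl rfl) b hb

theorem sortDesc_perm (l : List ℕ) : (sortDesc l).Perm l := List.mergeSort_perm _ _

theorem sortDesc_pairwise (l : List ℕ) : (sortDesc l).Pairwise fun a b => b ≤ a := by
  have h := List.pairwise_mergeSort (le := fun a b : ℕ => decide (b ≤ a))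
    (by intro a b c; simp; omega) (by intro a b; simp; omega) l
  simpa [sortDesc] using h

/-- Extracting the contents of `l` in decreasing order from `l + R` is legal iff `R` lies below
`l`. -/
theorem PQOK_sortDesc (l : List ℕ) (R : Multiset ℕ) (w : List Letter) :
    PQOK ((l : Multiset ℕ) + R) ((sortDesc l).map Letter.ext ++ w) ↔
      (∀ a ∈ l, ∀ b ∈ R, b ≤ a) ∧ PQOK R w := by
  have h := PQOK_ext_sorted (sortDesc l) (sortDesc_pairwise l) R w
  rw [Multiset.coe_eq_coe.2 (sortDesc_perm l)] at h
  simpa only [(sortDesc_perm l).mem_iff] using h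

/-- The values extracted inside the `i`-th motif. -/
def motifExtracted (n : ℕ) (x : ℕ → ℕ → Bool) (k : ℕ → ℕ) (d : ℕ → Bool) (i : ℕ) : List ℕ :=
  ((List.range (k i - 1)).map fun j => vVal n x i (j + 1)) ++ [aVal n k d i]

/-- The values of the `i`-th motif that survive it. -/
def motifLeft (n : ℕ) (x : ℕ → ℕ → Bool) (k : ℕ → ℕ) (i : ℕ) : List ℕ :=
  (List.range (n + 1 - k i)).map fun t => vVal n x i (k i + t)

theorem leftovers_succ (m n : ℕ) (x : ℕ → ℕ → Bool) (k : ℕ → ℕ) :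
    leftovers (m + 1) n x k = leftovers m n x k ++ motifLeft n x k (m + 1) := by
  simp [leftovers, motifLeft, List.range_succ, List.flatMap_append]

theorem inserted_perm (n : ℕ) (x : ℕ → ℕ → Bool) (k : ℕ → ℕ) (d : ℕ → Bool) (i : ℕ)
    (hk : 2 ≤ k i ∧ k i ≤ n) :
    (((List.range n).map fun j => vVal n x i (j + 1)) ++ [aVal n k d i]).Perm
      (motifExtracted n x k d i ++ motifLeft n x k i) := by
  have h : List.range n = List.range (k i - 1) ++
      (List.range (n + 1 - k i)).map (fun t => (k i - 1) + t) := by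
    rw [← List.range_add]
    congr 1
    omega
  have h' : motifLeft n x k i =
      ((List.range (n + 1 - k i)).map (fun t => (k i - 1) + t)).map
        fun j => vVal n x i (j + 1) := by
    rw [motifLeft, List.map_map]
    refine List.map_congr_left fun t _ => ?_
    simp only [Function.comp]
    congr 1
    omega
  rw [h, h', motifExtracted, List.map_append, List.append_assoc, List.append_assoc]
  exact List.perm_append_comm.append_left _

theorem PQOK_motif (n : ℕ) (x : ℕ → ℕ → Bool) (k : ℕ → ℕ) (d : ℕ → Bool) (i : ℕ)
    (hk : 2 ≤ k i ∧ k i ≤ n) (R : Multiset ℕ) (w : List Letter) :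
    PQOK R (motif n x k d i ++ w) ↔
      (∀ a ∈ motifExtracted n x k d i, ∀ b ∈ R + (motifLeft n x k i : Multiset ℕ), b ≤ a) ∧
        PQOK (R + (motifLeft n x k i : Multiset ℕ)) w := by
  have h : motif n x k d i ++ w =
      (((List.range n).map fun j => vVal n x i (j + 1)) ++ [aVal n k d i]).map Letter.ins ++
        ((sortDesc (motifExtracted n x k d i)).map Letter.ext ++ w) := by
    simp [motif, motifExtracted, Function.comp_def]
  rw [h, PQOK_ins, Multiset.coe_eq_coe.2 (inserted_perm n x k d i hk), ← Multiset.coe_add,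
    add_assoc, add_comm (motifLeft n x k i : Multiset ℕ) R, PQOK_sortDesc]

theorem bval_le (b : Bool) : bval b ≤ 1 := by cases b <;> simp [bval]

theorem leftovers_le (m n : ℕ) (x : ℕ → ℕ → Bool) (k : ℕ → ℕ)
    (hk : ∀ i, 1 ≤ i → i ≤ m → 2 ≤ k i ∧ k i ≤ n) :
    ∀ b ∈ leftovers m n x k, b ≤ 3 * (n * m) := by
  intro b hb
  simp only [leftovers, List.mem_flatMap, List.mem_range, List.mem_map] at hb
  obtain ⟨i, hi, t, ht, rfl⟩ := hb
  have hki := hk (i + 1) (by omega) (by omega)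
  have h1 : n * (i + 1) ≤ n * m := Nat.mul_le_mul_left n hi
  have h2 := bval_le (x (i + 1) (k (i + 1) + t))
  have h3 : n * (i + 1) = n * i + n := by ring
  unfold vVal
  omega

/-- If the earlier leftovers `R` lie below the window of motif `i + 1`, the extractions of that motif
are legal unless `d_{i+1} = 0` and `x_{i+1}[k_{i+1}] = 1`, and illegal in that case. -/
theorem motif_condition (n : ℕ) (x : ℕ → ℕ → Bool) (k : ℕ → ℕ) (d : ℕ → Bool) (i : ℕ)
    (hk : 2 ≤ k (i + 1) ∧ k (i + 1) ≤ n) (R : Multiset ℕ) (hR : ∀ b ∈ R, b ≤ 3 * (n * i)) :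
    (∀ a ∈ motifExtracted n x k d (i + 1),
        ∀ b ∈ R + (motifLeft n x k (i + 1) : Multiset ℕ), b ≤ a) ↔
      ¬(d (i + 1) = false ∧ x (i + 1) (k (i + 1)) = true) := by
  have h3 : n * (i + 1) = n * i + n := by ring
  simp only [motifExtracted, motifLeft, List.mem_append, List.mem_map, List.mem_range,
    List.mem_singleton, Multiset.mem_add, Multiset.mem_coe]
  constructor
  · rintro h ⟨hd, hx⟩
    have := h _ (Or.inr rfl) _ (Or.inr ⟨0, by omega, rfl⟩)
    simp [vVal, aVal, hd, hx, bval] at this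
  · rintro h a (⟨j, hj, rfl⟩ | rfl) b (hb | ⟨t, ht, rfl⟩)
    · have := hR b hb
      unfold vVal
      omega
    · have := bval_le (x (i + 1) (k (i + 1) + t))
      unfold vVal
      omega
    · have := hR b hb
      unfold aVal
      omega
    · have := bval_le (x (i + 1) (k (i + 1) + t))
      unfold vVal aVal
      -- Only `t = 0`, the comparison of `v_{i,k_i}` with `a_i`, uses the hypothesis on the bits.
      rcases Nat.eq_zero_or_pos t with rfl | h0
      · cases hd : d (i + 1) <;> cases hx : x (i + 1) (k (i + 1)) <;>
          simp_all [bval] <;> omega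
      · omega

/-- The first `m` motifs run legally iff none has `d_i = 0` and `x_i[k_i] = 1`, and they then leave
exactly `leftovers m n x k` in the queue. -/
theorem PQOK_motifs (n : ℕ) (x : ℕ → ℕ → Bool) (k : ℕ → ℕ) (d : ℕ → Bool) (m : ℕ)
    (hk : ∀ i, 1 ≤ i → i ≤ m → 2 ≤ k i ∧ k i ≤ n) (w : List Letter) :
    PQOK 0 (((List.range m).flatMap fun i' => motif n x k d (i' + 1)) ++ w) ↔
      (∀ i, 1 ≤ i → i ≤ m → ¬(d i = false ∧ x i (k i) = true)) ∧
        PQOK (leftovers m n x k : Multiset ℕ) w := by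
  induction m generalizing w with
  | zero =>
    have h : ∀ i, 1 ≤ i → i ≤ 0 → ¬(d i = false ∧ x i (k i) = true) := fun i h1 h2 => by omega
    simp only [leftovers, List.range_zero, List.flatMap_nil, List.nil_append, Multiset.coe_nil]
    exact ⟨fun hw => ⟨h, hw⟩, And.right⟩
  | succ m ih =>
    have hk' : ∀ i, 1 ≤ i → i ≤ m → 2 ≤ k i ∧ k i ≤ n := fun i h1 h2 => hk i h1 (by omega)
    have hkm := hk (m + 1) (by omega) le_rfl
    rw [List.range_succ, List.flatMap_append, List.flatMap_singleton, List.append_assoc, ih hk',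
      PQOK_motif n x k d (m + 1) hkm,
      motif_condition n x k d m hkm _ (leftovers_le m n x k hk'), leftovers_succ,
      ← Multiset.coe_add, ← and_assoc]
    refine and_congr_left fun _ => ⟨?_, ?_⟩
    · rintro ⟨h1, h2⟩ i hi hi'
      rcases Nat.lt_or_ge m i with h | h
      · obtain rfl : i = m + 1 := by omega
        exact h2
      · exact h1 i hi h
    · intro h
      exact ⟨fun i hi hi' => h i hi (by omega), h (m + 1) (by omega) le_rfl⟩

theorem hardWord_value_le (m n : ℕ) (x : ℕ → ℕ → Bool) (k : ℕ → ℕ) (d : ℕ → Bool)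
    (hk : ∀ i, 1 ≤ i → i ≤ m → 2 ≤ k i ∧ k i ≤ n) :
    ∀ l ∈ hardWord m n x k d, l.value ≤ 3 * m * n := by
  have e : 3 * m * n = 3 * (n * m) := by ring
  have hv : ∀ i j, i < m → j < n → vVal n x (i + 1) (j + 1) ≤ 3 * (n * m) := by
    intro i j hi hj
    have h1 : n * (i + 1) ≤ n * m := Nat.mul_le_mul_left n hi
    have h2 := bval_le (x (i + 1) (j + 1))
    have h3 : n * (i + 1) = n * i + n := by ring
    unfold vVal
    omega
  have ha : ∀ i, i < m → aVal n k d (i + 1) ≤ 3 * (n * m) := by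
    intro i hi
    have hki := hk (i + 1) (by omega) (by omega)
    have h1 : n * (i + 1) ≤ n * m := Nat.mul_le_mul_left n hi
    have h2 := bval_le (d (i + 1))
    have h3 : n * (i + 1) = n * i + n := by ring
    unfold aVal
    omega
  intro l hl
  rw [e]
  simp only [hardWord, motif, List.mem_append, List.mem_flatMap, List.mem_map, List.mem_range,
    List.mem_singleton, (sortDesc_perm _).mem_iff] at hl
  rcases hl with ⟨i, hi, (⟨j, hj, rfl⟩ | rfl) | ⟨a, ⟨j, hj, rfl⟩ | rfl, rfl⟩⟩ | ⟨b, hb, rfl⟩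
  · exact hv i j hi hj
  · exact ha i hi
  · have hki := hk (i + 1) (by omega) (by omega)
    exact hv i j hi (by omega)
  · exact ha i hi
  · exact leftovers_le m n x k hk b hb

/-- Correctness of the reduction on hard instances: `w(x,k,d) ∈ PQ(3mn)` iff
`f_m(x,k,d) = 0`, i.e. iff for every `i ∈ {1,…,m}` it is not the case that `d_i = 0` and
`x_i[k_i] = 1`. -/
theorem hardWord_mem_PQ_iff (m n : ℕ) (hm : 0 < m) (hn : 2 ≤ n)
    (x : ℕ → ℕ → Bool) (k : ℕ → ℕ) (d : ℕ → Bool)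
    (hk : ∀ i, 1 ≤ i → i ≤ m → 2 ≤ k i ∧ k i ≤ n) :
    ((∀ l ∈ hardWord m n x k d, l.value ≤ 3 * m * n) ∧
        PQOK 0 (hardWord m n x k d)) ↔
      ∀ i, 1 ≤ i → i ≤ m → ¬(d i = false ∧ x i (k i) = true) := by
  rw [and_iff_right (hardWord_value_le m n x k d hk), hardWord, PQOK_motifs n x k d m hk]
  -- The final block extracts all of the remaining multiset, so nothing can obstruct it.
  have h := PQOK_sortDesc (leftovers m n x k) 0 []
  rw [add_zero, List.append_nil] at h
  exact and_iff_left (h.2 ⟨by simp, rfl⟩)
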